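/- The equation y = φ(y)/Φ(y) has exactly one real solution y₀, and this solution satisfies 0.5 < y₀ < 0.51. -/

import Mathlib

open Real

/-- Density of the standard normal distribution. -/
noncomputable def stdPdf (y : ℝ) : ℝ := (Real.sqrt (2 * Real.pi))⁻¹ * Real.exp (-(y ^ 2) / 2)

/-- Cumulative distribution function of the standard normal distribution. -/
noncomputable def stdCdf (y : ℝ) : ℝ := ∫ x in Set.Iic y, stdPdf x

/-!
On `[0, ∞)` the density `φ` decreases and `Φ` increases, so `φ/Φ` is antitone there; outside it has
no fixed point, being positive. An antitone function has at most one fixed point, and a fixed point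
exists and lies strictly between `a` and `b` as soon as the continuous function `φ/Φ` exceeds `a` at
`a` and is below `b` at `b`. For `a = 0.5` and `b = 0.51` the margins are small but wide enough for
low-order bounds: `φ(x)/φ(0) = exp (-x²/2)` is compared with `1`, `1 - x²/2`, `(1 - x²/4)²` and
`1 / (1 + x²/2)`, and `Φ(y) = 1/2 + ∫₀ʸ φ` is estimated through the first two.
-/

open MeasureTheory Set Function

section AntitoneFixedPoints

variable {α : Type*} [LinearOrder α] {f : α → α} {s : Set α} {a b x y : α}

lemma lt_fixedPt_of_antitoneOn (hf : AntitoneOn f s) (ha : a ∈ s) (hx : x ∈ s) (hfa : a < f a)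
    (hfx : IsFixedPt f x) : a < x := by
  by_contra! hxa
  have hfax : f a ≤ x := (hf hx ha hxa).trans_eq hfx
  exact (hfa.trans_le (hfax.trans hxa)).false

lemma fixedPt_lt_of_antitoneOn (hf : AntitoneOn f s) (hb : b ∈ s) (hx : x ∈ s) (hfb : f b < b)
    (hfx : IsFixedPt f x) : x < b :=
  lt_fixedPt_of_antitoneOn (α := αᵒᵈ) hf.dual hb hx hfb hfx

lemma fixedPt_unique_of_antitoneOn (hf : AntitoneOn f s) (hx : x ∈ s) (hy : y ∈ s)
    (hfx : IsFixedPt f x) (hfy : IsFixedPt f y) : x = y := by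
  rcases le_total x y with hxy | hyx
  · exact hxy.antisymm (by simpa only [hfx.eq, hfy.eq] using hf hx hy hxy)
  · exact (by simpa only [hfx.eq, hfy.eq] using hf hy hx hyx : x ≤ y).antisymm hyx

end AntitoneFixedPoints

lemma two_nsmul_integral_Iic_zero_of_even {E : Type*} [NormedAddCommGroup E] [NormedSpace ℝ E]
    {f : ℝ → E} (hf : f.Even) (hfi : Integrable f) : 2 • ∫ x in Iic 0, f x = ∫ x, f x := by
  have reflect : ∫ x in Iic 0, f x = ∫ x in Ioi 0, f x := by
    simpa only [hf _, neg_zero] using integral_comp_neg_Iic 0 f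
  rw [two_nsmul, ← intervalIntegral.integral_Iic_add_Ioi hfi.integrableOn hfi.integrableOn,
    ← reflect]

lemma stdPdf_eq_gaussianPDFReal : stdPdf = ProbabilityTheory.gaussianPDFReal 0 1 := by
  ext x
  simp only [stdPdf, ProbabilityTheory.gaussianPDFReal, NNReal.coe_one, mul_one, sub_zero]

lemma stdPdf_pos (x : ℝ) : 0 < stdPdf x := by
  unfold stdPdf
  positivity

lemma stdPdf_even : stdPdf.Even := fun x ↦ by
  simp only [stdPdf, neg_sq]

lemma continuous_stdPdf : Continuous stdPdf := by
  unfold stdPdf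
  fun_prop

lemma integrable_stdPdf : Integrable stdPdf :=
  stdPdf_eq_gaussianPDFReal ▸ ProbabilityTheory.integrable_gaussianPDFReal 0 1

lemma integral_stdPdf : ∫ x, stdPdf x = 1 :=
  stdPdf_eq_gaussianPDFReal ▸ ProbabilityTheory.integral_gaussianPDFReal_eq_one 0 one_ne_zero

lemma antitoneOn_stdPdf : AntitoneOn stdPdf (Ici 0) := by
  intro x hx y _ hxy
  have hx : 0 ≤ x := hx
  unfold stdPdf
  gcongr

lemma stdPdf_zero : stdPdf 0 = (√(2 * π))⁻¹ := by
  simp [stdPdf]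

lemma stdPdf_eq_stdPdf_zero_mul_exp (x : ℝ) : stdPdf x = stdPdf 0 * exp (-(x ^ 2 / 2)) := by
  rw [stdPdf_zero, stdPdf, neg_div]

lemma stdPdf_le_stdPdf_zero (x : ℝ) : stdPdf x ≤ stdPdf 0 := by
  rw [stdPdf_eq_stdPdf_zero_mul_exp x]
  exact mul_le_of_le_one_right (stdPdf_pos 0).le (exp_le_one_iff.2 (neg_nonpos.2 (by positivity)))

lemma stdPdf_zero_mul_one_sub_le (x : ℝ) : stdPdf 0 * (1 - x ^ 2 / 2) ≤ stdPdf x := by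
  rw [stdPdf_eq_stdPdf_zero_mul_exp x]
  exact mul_le_mul_of_nonneg_left (one_sub_le_exp_neg _) (stdPdf_pos 0).le

lemma stdPdf_zero_mul_one_sub_sq_le {x : ℝ} (hx : x ^ 2 ≤ 4) :
    stdPdf 0 * (1 - x ^ 2 / 4) ^ 2 ≤ stdPdf x := by
  have exp_bound : (1 - x ^ 2 / 2 / (2 : ℕ)) ^ 2 ≤ exp (-(x ^ 2 / 2)) :=
    one_sub_div_pow_le_exp_neg (by norm_num; linarith)
  rw [stdPdf_eq_stdPdf_zero_mul_exp x]
  refine mul_le_mul_of_nonneg_left (le_of_eq_of_le ?_ exp_bound) (stdPdf_pos 0).le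
  ring

lemma stdPdf_mul_one_add_le_stdPdf_zero (x : ℝ) : stdPdf x * (1 + x ^ 2 / 2) ≤ stdPdf 0 := by
  have exp_bound : 1 + x ^ 2 / 2 ≤ exp (x ^ 2 / 2) := by
    linarith [add_one_le_exp (x ^ 2 / 2)]
  calc stdPdf x * (1 + x ^ 2 / 2)
      ≤ stdPdf x * exp (x ^ 2 / 2) := mul_le_mul_of_nonneg_left exp_bound (stdPdf_pos x).le
    _ = stdPdf 0 := by
      rw [stdPdf_eq_stdPdf_zero_mul_exp x, mul_assoc, ← exp_add, neg_add_cancel, exp_zero, mul_one]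

lemma lt_stdPdf_zero : 0.3989 < stdPdf 0 := by
  rw [stdPdf_zero, lt_inv_comm₀ (by norm_num) (by positivity), sqrt_lt' (by norm_num)]
  linarith [pi_lt_d4]

lemma stdPdf_zero_lt : stdPdf 0 < 0.399 := by
  rw [stdPdf_zero, inv_lt_comm₀ (by positivity) (by norm_num), lt_sqrt (by norm_num)]
  linarith [pi_gt_d4]

lemma stdCdf_zero : stdCdf 0 = 1 / 2 := by
  have doubled := two_nsmul_integral_Iic_zero_of_even stdPdf_even integrable_stdPdf
  rw [integral_stdPdf, nsmul_eq_mul, Nat.cast_ofNat] at doubled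
  unfold stdCdf
  linarith

lemma stdCdf_eq_half_add_integral (y : ℝ) : stdCdf y = 1 / 2 + ∫ x in 0..y, stdPdf x := by
  rw [← stdCdf_zero, stdCdf, stdCdf, ← intervalIntegral.integral_Iic_sub_Iic
    integrable_stdPdf.integrableOn integrable_stdPdf.integrableOn, add_sub_cancel]

lemma stdCdf_pos (y : ℝ) : 0 < stdCdf y := by
  rw [stdCdf, setIntegral_pos_iff_support_of_nonneg_ae (ae_of_all _ fun x ↦ (stdPdf_pos x).le)
    integrable_stdPdf.integrableOn, support_eq_univ fun x ↦ (stdPdf_pos x).ne', univ_inter,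
    Real.volume_Iic]
  exact ENNReal.zero_lt_top

lemma monotone_stdCdf : Monotone stdCdf := fun _ _ hxy ↦
  setIntegral_mono_set integrable_stdPdf.integrableOn (ae_of_all _ fun x ↦ (stdPdf_pos x).le)
    (Iic_subset_Iic.2 hxy).eventuallyLE

lemma continuous_stdCdf : Continuous stdCdf := by
  simp only [funext stdCdf_eq_half_add_integral]
  exact continuous_const.add
    (intervalIntegral.continuous_primitive (fun _ _ ↦ continuous_stdPdf.intervalIntegrable _ _) 0)

lemma stdCdf_le_half_add {y : ℝ} (hy : 0 ≤ y) : stdCdf y ≤ 1 / 2 + stdPdf 0 * y := by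
  rw [stdCdf_eq_half_add_integral]
  gcongr
  calc ∫ x in 0..y, stdPdf x
      ≤ ∫ _ in 0..y, stdPdf 0 :=
        intervalIntegral.integral_mono hy (continuous_stdPdf.intervalIntegrable _ _)
          intervalIntegrable_const stdPdf_le_stdPdf_zero
    _ = stdPdf 0 * y := by rw [intervalIntegral.integral_const, sub_zero, smul_eq_mul, mul_comm]

lemma half_add_le_stdCdf {y : ℝ} (hy : 0 ≤ y) :
    1 / 2 + stdPdf 0 * (y - y ^ 3 / 6) ≤ stdCdf y := by
  have integral_minorant : ∫ x in 0..y, (1 - x ^ 2 / 2) = y - y ^ 3 / 6 := by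
    rw [intervalIntegral.integral_sub intervalIntegrable_const
      (Continuous.intervalIntegrable (by fun_prop) _ _), intervalIntegral.integral_const,
      intervalIntegral.integral_div, integral_pow, smul_eq_mul]
    ring
  rw [stdCdf_eq_half_add_integral]
  gcongr
  calc stdPdf 0 * (y - y ^ 3 / 6)
      = ∫ x in 0..y, stdPdf 0 * (1 - x ^ 2 / 2) := by
        rw [intervalIntegral.integral_const_mul, integral_minorant]
    _ ≤ ∫ x in 0..y, stdPdf x :=
        intervalIntegral.integral_mono hy (Continuous.intervalIntegrable (by fun_prop) _ _)
          (continuous_stdPdf.intervalIntegrable _ _) stdPdf_zero_mul_one_sub_le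

/-- The inverse Mills ratio `φ/Φ` of the standard normal distribution, in its left-tail form;
the right-tail form `φ/(1 - Φ)` is its reflection `y ↦ -y`. -/
noncomputable def inverseMills (y : ℝ) : ℝ := stdPdf y / stdCdf y

lemma inverseMills_pos (y : ℝ) : 0 < inverseMills y :=
  div_pos (stdPdf_pos y) (stdCdf_pos y)

lemma continuous_inverseMills : Continuous inverseMills :=
  continuous_stdPdf.div continuous_stdCdf fun y ↦ (stdCdf_pos y).ne'

lemma antitoneOn_inverseMills : AntitoneOn inverseMills (Ici 0) := fun x hx _ hy hxy ↦
  div_le_div₀ (stdPdf_pos x).le (antitoneOn_stdPdf hx hy hxy) (stdCdf_pos x) (monotone_stdCdf hxy)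

lemma half_lt_inverseMills_half : 0.5 < inverseMills 0.5 := by
  rw [inverseMills, lt_div_iff₀ (stdCdf_pos _)]
  have cdf_upper : stdCdf 0.5 ≤ 1 / 2 + stdPdf 0 * 0.5 := stdCdf_le_half_add (by norm_num)
  have pdf_lower : stdPdf 0 * (1 - 0.5 ^ 2 / 4) ^ 2 ≤ stdPdf 0.5 :=
    stdPdf_zero_mul_one_sub_sq_le (by norm_num)
  linarith [lt_stdPdf_zero]

lemma inverseMills_fifty_one_hundredths_lt : inverseMills 0.51 < 0.51 := by
  rw [inverseMills, div_lt_iff₀ (stdCdf_pos _)]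
  have cdf_lower : 1 / 2 + stdPdf 0 * (0.51 - 0.51 ^ 3 / 6) ≤ stdCdf 0.51 :=
    half_add_le_stdCdf (by norm_num)
  have pdf_upper : stdPdf 0.51 * (1 + 0.51 ^ 2 / 2) ≤ stdPdf 0 :=
    stdPdf_mul_one_add_le_stdPdf_zero 0.51
  linarith [stdPdf_zero_lt]

lemma nonneg_of_isFixedPt_inverseMills {y : ℝ} (hy : IsFixedPt inverseMills y) : 0 ≤ y :=
  hy.eq ▸ (inverseMills_pos y).le

/-- The equation `y = φ(y)/Φ(y)` has exactly one real solution, and this solution lies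
strictly between `0.5` and `0.51`. -/
theorem unique_solution_of_inverse_mills_fixed_point :
    (∃! y : ℝ, y = stdPdf y / stdCdf y) ∧
    ∀ y : ℝ, y = stdPdf y / stdCdf y → 0.5 < y ∧ y < 0.51 := by
  have fixedPt_iff (y : ℝ) : y = stdPdf y / stdCdf y ↔ IsFixedPt inverseMills y := eq_comm
  simp only [fixedPt_iff]
  have lower_mem : (0.5 : ℝ) ∈ Ici 0 := mem_Ici.2 (by norm_num)
  have upper_mem : (0.51 : ℝ) ∈ Ici 0 := mem_Ici.2 (by norm_num)
  constructor
  · obtain ⟨y, -, hy⟩ : ∃ y ∈ Icc 0.5 0.51, IsFixedPt inverseMills y :=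
      exists_mem_Icc_isFixedPt continuous_inverseMills.continuousOn (by norm_num)
        half_lt_inverseMills_half.le inverseMills_fifty_one_hundredths_lt.le
    exact ⟨y, hy, fun z hz ↦ fixedPt_unique_of_antitoneOn antitoneOn_inverseMills
      (nonneg_of_isFixedPt_inverseMills hz) (nonneg_of_isFixedPt_inverseMills hy) hz hy⟩
  · intro y hy
    have y_mem : y ∈ Ici 0 := nonneg_of_isFixedPt_inverseMills hy
    exact ⟨lt_fixedPt_of_antitoneOn antitoneOn_inverseMills lower_mem y_mem
        half_lt_inverseMills_half hy,
      fixedPt_lt_of_antitoneOn antitoneOn_inverseMills upper_mem y_mem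
        inverseMills_fifty_one_hundredths_lt hy⟩
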